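/- arXiv:1205.4889 — 2 statements merged into one kernel-verified Lean document; each statement's English description precedes it below -/
import Mathlib

section
/- Let (σ_i)_{i∈Π} be a strategy profile in a quantitative multiplayer reachability game G with outcome ρ = λλ'ρ̄, where λ' contains at least one vertex, Visit(λ) = Visit(λλ') and last(λ) = last(λλ'). Then there exists a strategy profile (τ_i)_{i∈Π} with outcome λρ̄ such that whenever some player j has a profitable deviation with respect to (τ_i)_{i∈Π}, player j also has a profitable deviation with respect to (σ_i)_{i∈Π}. -/
/-- A quantitative multiplayer reachability game: a finite directed graph whose
vertex set is partitioned among the players (via `owner`), with an initial vertex `v0`,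
an edge relation `E` such that every vertex has an outgoing edge, and a goal set
`goal i` for each player `i`. -/
structure ReachGame (P : Type) (V : Type) where
  owner : V → P
  v0 : V
  E : V → V → Prop
  total : ∀ v : V, ∃ w : V, E v w
  goal : P → Set V

namespace ReachGame

variable {P V : Type} [DecidableEq P] (G : ReachGame P V)

/-- The last vertex of a history (with default `v0`). -/
def lastV (h : List V) : V := h.getLastD G.v0

/-- A history: a nonempty finite path in the graph starting at `v0`. -/
def IsHistory (h : List V) : Prop :=
  h ≠ [] ∧ h.head? = some G.v0 ∧ List.Chain' G.E h

/-- A play: an infinite path starting at `v0`. -/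
def IsPlay (ρ : ℕ → V) : Prop :=
  ρ 0 = G.v0 ∧ ∀ k : ℕ, G.E (ρ k) (ρ (k + 1))

/-- `σ` is a (total encoding of a) strategy of player `i`: on every history ending in
a vertex owned by `i` it chooses a successor along an edge. -/
def IsStrategy (i : P) (σ : List V → V) : Prop :=
  ∀ h : List V, G.IsHistory h → G.owner (G.lastV h) = i → G.E (G.lastV h) (σ h)

/-- A strategy profile: one strategy per player. -/
def IsProfile (prof : P → List V → V) : Prop :=
  ∀ i : P, G.IsStrategy i (prof i)

/-- The history of length `n` (i.e. with `n` edges) obtained by letting the players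
follow the profile `prof` from `v0`. -/
def outHist (prof : P → List V → V) : ℕ → List V
  | 0 => [G.v0]
  | n + 1 => outHist prof n ++ [prof (G.owner (G.lastV (outHist prof n))) (outHist prof n)]

/-- The outcome play of the strategy profile `prof`. -/
def outcome (prof : P → List V → V) (n : ℕ) : V :=
  G.lastV (G.outHist prof n)

/-- The cost of player `i` for the play `ρ`: the least `l` with `ρ l ∈ goal i`,
and `⊤` (`+∞`) if there is no such `l`. -/
noncomputable def cost (i : P) (ρ : ℕ → V) : ℕ∞ :=
  sInf {n : ℕ∞ | ∃ l : ℕ, n = (l : ℕ∞) ∧ ρ l ∈ G.goal i}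

/-- Nash equilibrium: no player can strictly decrease his cost by a unilateral
deviation. -/
def IsNash (prof : P → List V → V) : Prop :=
  ∀ (j : P) (σ' : List V → V), G.IsStrategy j σ' →
    G.cost j (G.outcome prof) ≤ G.cost j (G.outcome (Function.update prof j σ'))

/-- `h ≈_σ h'` : the strategy `σ` of player `i` behaves the same after `h` and `h'`,
i.e. `σ (h ++ δ) = σ (h' ++ δ)` for every suffix `δ` making both `h ++ δ` and
`h' ++ δ` histories ending in a vertex of player `i`. -/
def MemEq (i : P) (σ : List V → V) (h h' : List V) : Prop :=
  ∀ δ : List V,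
    G.IsHistory (h ++ δ) → G.owner (G.lastV (h ++ δ)) = i →
    G.IsHistory (h' ++ δ) → G.owner (G.lastV (h' ++ δ)) = i →
    σ (h ++ δ) = σ (h' ++ δ)

/-- A strategy of player `i` is finite-memory if the relation `≈_σ` has finitely many
equivalence classes on histories, i.e. there is a finite set of histories meeting
every class. -/
def FiniteMemory (i : P) (σ : List V → V) : Prop :=
  ∃ S : Finset (List V), ∀ h : List V, G.IsHistory h →
    ∃ h' ∈ S, G.IsHistory h' ∧ G.MemEq i σ h h'

/-- A profile is finite-memory if each of its strategies is. -/
def FiniteMemoryProfile (prof : P → List V → V) : Prop :=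
  ∀ i : P, G.FiniteMemory i (prof i)

/-- `Visit h`: the set of players whose goal set is visited by the finite path `h`. -/
def visitL (h : List V) : Set P := {i : P | ∃ v ∈ h, v ∈ G.goal i}

/-- The type of a strategy profile: the set of players whose goal set is visited by
the outcome. -/
def typeOf (prof : P → List V → V) : Set P :=
  {i : P | ∃ l : ℕ, G.outcome prof l ∈ G.goal i}

/-! ### The truncated game `G^d` -/

/-- A strategy of player `i` in the truncated game `G^d` : it chooses a successor on
every history with less than `d` edges (list length `≤ d`) ending in a vertex of `i`. -/
def IsStrategyTrunc (d : ℕ) (i : P) (σ : List V → V) : Prop :=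
  ∀ h : List V, G.IsHistory h → h.length ≤ d → G.owner (G.lastV h) = i →
    G.E (G.lastV h) (σ h)

/-- A strategy profile of the truncated game `G^d`. -/
def IsProfileTrunc (d : ℕ) (prof : P → List V → V) : Prop :=
  ∀ i : P, G.IsStrategyTrunc d i (prof i)

/-- The cost of player `i` for a finite play `h` (a list of vertices): the least
position of `h` lying in `goal i`, and `⊤` if `goal i` is not visited. -/
noncomputable def costList (i : P) (h : List V) : ℕ∞ :=
  sInf {n : ℕ∞ | ∃ l : ℕ, n = (l : ℕ∞) ∧ l < h.length ∧ h.getD l G.v0 ∈ G.goal i}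

/-- Nash equilibrium of the truncated game `G^d` (whose plays are the histories with
exactly `d` edges). -/
def IsNashTrunc (d : ℕ) (prof : P → List V → V) : Prop :=
  ∀ (j : P) (σ' : List V → V), G.IsStrategyTrunc d j σ' →
    G.costList j (G.outHist prof d) ≤
      G.costList j (G.outHist (Function.update prof j σ') d)

/-- The type of a strategy profile of the truncated game `G^d`. -/
def typeOfTrunc (d : ℕ) (prof : P → List V → V) : Set P :=
  G.visitL (G.outHist prof d)

end ReachGame

/-!
Let `x` and `y` be the histories reached before and after the cycle. In the new profile, everybody
plays after `x` as they used to after `y`. A deviation from the new profile that never passes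
through `x` is a deviation from the old one with the same outcome, and removing the cycle does not
increase anyone's cost. A deviation that passes through `x` is postponed: first go around the cycle
with everybody else, then deviate. The outcomes of the old profile and of the postponed deviation
thus share the cycle. If the deviator's goal set is visited before it, removing the cycle changes
neither of the two costs; otherwise the cycle does not visit that goal set either, and removing it
lowers both costs by its length.
-/

namespace ReachGame

section Histories

variable {P V : Type} (G : ReachGame P V)

theorem lastV_append_congr {x y : List V} (h : G.lastV x = G.lastV y) (d : List V) :
    G.lastV (x ++ d) = G.lastV (y ++ d) := by
  rcases List.eq_nil_or_concat' d with rfl | ⟨d, v, rfl⟩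
  · simpa only [List.append_nil] using h
  · simp [lastV]

theorem isHistory_append_iff {x : List V} (hx : x ≠ []) (d : List V) :
    G.IsHistory (x ++ d) ↔ G.IsHistory x ∧ List.IsChain G.E (G.lastV x :: d) := by
  obtain ⟨x, v, rfl⟩ := (List.eq_nil_or_concat' x).resolve_left hx
  have hchain : List.IsChain G.E (x ++ [v] ++ d) ↔
      List.IsChain G.E (x ++ [v]) ∧ List.IsChain G.E (v :: d) := by
    rw [List.append_assoc]
    exact List.isChain_split
  have hlast : G.lastV (x ++ [v]) = v := List.getLastD_concat
  rw [hlast]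
  constructor
  · rintro ⟨-, hhead, h⟩
    rw [List.head?_append_of_ne_nil _ hx] at hhead
    exact ⟨⟨hx, hhead, (hchain.1 h).1⟩, (hchain.1 h).2⟩
  · rintro ⟨⟨-, hhead, h⟩, hd⟩
    rw [← List.head?_append_of_ne_nil (l₂ := d) _ hx] at hhead
    exact ⟨List.append_ne_nil_of_left_ne_nil hx d, hhead, hchain.2 ⟨h, hd⟩⟩

variable {G} in
theorem IsHistory.replace_prefix {x y d : List V} (h : G.IsHistory (x ++ d)) (hx : x ≠ [])
    (hy : G.IsHistory y) (hlast : G.lastV x = G.lastV y) : G.IsHistory (y ++ d) := by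
  rw [G.isHistory_append_iff hx, hlast] at h
  exact (G.isHistory_append_iff hy.1 d).2 ⟨hy, h.2⟩

end Histories

section Outcomes

variable {P V : Type} (G : ReachGame P V) (σ : P → List V → V)

theorem outHist_eq_map_outcome (n : ℕ) :
    G.outHist σ n = (List.range (n + 1)).map (G.outcome σ) := by
  induction n with
  | zero => rfl
  | succ n ih =>
    rw [List.range_succ, List.map_append, ← ih, outHist]
    simp [outcome, outHist, lastV]

theorem length_outHist (n : ℕ) : (G.outHist σ n).length = n + 1 := by
  simp [outHist_eq_map_outcome]

theorem outHist_ne_nil (n : ℕ) : G.outHist σ n ≠ [] := by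
  simp [outHist_eq_map_outcome]

theorem outHist_eq_outHist_iff {σ τ : P → List V → V} {n : ℕ} :
    G.outHist σ n = G.outHist τ n ↔ ∀ k ≤ n, G.outcome σ k = G.outcome τ k := by
  simp [outHist_eq_map_outcome]

theorem mem_visitL_outHist_iff {i : P} {n : ℕ} :
    i ∈ G.visitL (G.outHist σ n) ↔ ∃ k < n + 1, G.outcome σ k ∈ G.goal i := by
  simp [visitL, outHist_eq_map_outcome]

theorem outHist_eq_of_outcome_eq_getD {l : List V} {n : ℕ} (hlen : l.length = n + 1)
    (h : ∀ k < l.length, G.outcome σ k = l.getD k G.v0) : G.outHist σ n = l := by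
  refine List.ext_getElem (by rw [length_outHist, hlen]) fun k _ hk => ?_
  simpa [outHist_eq_map_outcome, hk] using h k hk

theorem outHist_eq_of_isPrefix {l : List V} {m n : ℕ} (hlen : l.length = m + 1)
    (h : l <+: G.outHist σ n) : G.outHist σ m = l := by
  have hmn : m + 1 ≤ n + 1 := by simpa only [hlen, length_outHist] using h.length_le
  rw [List.prefix_iff_eq_take.1 h, hlen, outHist_eq_map_outcome, outHist_eq_map_outcome,
    ← List.map_take, List.take_range, min_eq_left hmn]

theorem isHistory_outHist {σ : P → List V → V} (hσ : G.IsProfile σ) (n : ℕ) :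
    G.IsHistory (G.outHist σ n) := by
  induction n with
  | zero => exact ⟨List.cons_ne_nil _ _, rfl, List.isChain_singleton _⟩
  | succ n ih =>
    rw [outHist, G.isHistory_append_iff (G.outHist_ne_nil σ n), List.isChain_pair]
    exact ⟨ih, hσ _ _ ih rfl⟩

theorem outHist_congr {σ τ : P → List V → V} {n : ℕ}
    (h : ∀ k < n, ∀ i, G.owner (G.lastV (G.outHist σ k)) = i →
      σ i (G.outHist σ k) = τ i (G.outHist σ k)) :
    G.outHist σ n = G.outHist τ n := by
  induction n with
  | zero => rfl
  | succ n ih =>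
    have ih := ih fun k hk => h k (hk.trans n.lt_succ_self)
    rw [outHist, outHist, ← ih, h n n.lt_succ_self _ rfl]

theorem exists_outHist_add_eq_append {σ τ : P → List V → V} {m n : ℕ}
    (hlast : G.outcome τ m = G.outcome σ n)
    (h : ∀ i d, τ i (G.outHist τ m ++ d) = σ i (G.outHist σ n ++ d)) (k : ℕ) :
    ∃ d, G.outHist τ (m + k) = G.outHist τ m ++ d ∧ G.outHist σ (n + k) = G.outHist σ n ++ d := by
  induction k with
  | zero => exact ⟨[], by simp⟩
  | succ k ih =>
    obtain ⟨d, hτ, hσ⟩ := ih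
    refine ⟨d ++ [τ (G.owner (G.lastV (G.outHist τ m ++ d))) (G.outHist τ m ++ d)], ?_, ?_⟩
    · rw [← add_assoc, outHist, hτ, List.append_assoc]
    · rw [← add_assoc, outHist, hσ, List.append_assoc, h, G.lastV_append_congr hlast]

theorem outcome_add_eq_outcome_add {σ τ : P → List V → V} {m n : ℕ}
    (hlast : G.outcome τ m = G.outcome σ n)
    (h : ∀ i d, τ i (G.outHist τ m ++ d) = σ i (G.outHist σ n ++ d)) (k : ℕ) :
    G.outcome τ (m + k) = G.outcome σ (n + k) := by
  obtain ⟨d, hτ, hσ⟩ := G.exists_outHist_add_eq_append hlast h k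
  rw [outcome, outcome, hτ, hσ, G.lastV_append_congr hlast]

end Outcomes

section Excise

/-- The play obtained from `ρ` by removing the `p` vertices at positions `n, …, n + p - 1`. -/
def excise {V : Type*} (n p : ℕ) (ρ : ℕ → V) (k : ℕ) : V :=
  if k < n then ρ k else ρ (k + p)

variable {P V : Type} (G : ReachGame P V)

theorem excise_of_lt {V : Type*} {n k : ℕ} (p : ℕ) (ρ : ℕ → V) (hk : k < n) :
    excise n p ρ k = ρ k :=
  if_pos hk

theorem excise_of_le {V : Type*} {n k : ℕ} (p : ℕ) (ρ : ℕ → V) (hk : n ≤ k) :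
    excise n p ρ k = ρ (k + p) :=
  if_neg hk.not_gt

theorem cost_le_of_mem_goal {i : P} {ρ : ℕ → V} {k : ℕ} (hk : ρ k ∈ G.goal i) :
    G.cost i ρ ≤ k :=
  sInf_le ⟨k, rfl, hk⟩

theorem le_cost_iff {i : P} {ρ : ℕ → V} {c : ℕ∞} :
    c ≤ G.cost i ρ ↔ ∀ k, ρ k ∈ G.goal i → c ≤ k := by
  refine le_sInf_iff.trans ⟨fun h k hk => h k ⟨k, rfl, hk⟩, ?_⟩
  rintro h _ ⟨k, rfl, hk⟩
  exact h k hk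

theorem cost_le_cost_of_forall_lt_eq {i : P} {ρ ρ' : ℕ → V} {n : ℕ} (heq : ∀ k < n, ρ k = ρ' k)
    (hvisit : ∃ k < n, ρ k ∈ G.goal i) : G.cost i ρ ≤ G.cost i ρ' := by
  obtain ⟨k, hkn, hk⟩ := hvisit
  refine G.le_cost_iff.2 fun l hl => ?_
  rcases lt_or_ge l n with hln | hnl
  · exact G.cost_le_of_mem_goal (heq l hln ▸ hl)
  · exact (G.cost_le_of_mem_goal hk).trans (by exact_mod_cast hkn.le.trans hnl)

theorem cost_excise_of_visit {i : P} {ρ : ℕ → V} {n : ℕ} (p : ℕ)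
    (hvisit : ∃ k < n, ρ k ∈ G.goal i) : G.cost i (excise n p ρ) = G.cost i ρ := by
  have heq : ∀ k < n, excise n p ρ k = ρ k := fun k hk => excise_of_lt p ρ hk
  refine le_antisymm (G.cost_le_cost_of_forall_lt_eq heq ?_)
    (G.cost_le_cost_of_forall_lt_eq (fun k hk => (heq k hk).symm) hvisit)
  obtain ⟨k, hkn, hk⟩ := hvisit
  exact ⟨k, hkn, (heq k hkn).symm ▸ hk⟩

theorem cost_excise_add_of_not_visit {i : P} {ρ : ℕ → V} {n p : ℕ}
    (hvisit : ∀ k < n + p, ρ k ∉ G.goal i) : G.cost i (excise n p ρ) + p = G.cost i ρ := by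
  apply le_antisymm
  · refine G.le_cost_iff.2 fun l hl => ?_
    have hnl : n + p ≤ l := not_lt.1 fun hlt => hvisit l hlt hl
    obtain ⟨k, rfl⟩ := Nat.exists_eq_add_of_le' (le_of_add_le_right hnl)
    have hk : excise n p ρ k ∈ G.goal i := by rwa [excise_of_le p ρ (by omega)]
    push_cast
    gcongr
    exact G.cost_le_of_mem_goal hk
  · rw [← tsub_le_iff_right]
    refine G.le_cost_iff.2 fun k hk => ?_
    rcases lt_or_ge k n with hkn | hnk
    · rw [excise_of_lt p ρ hkn] at hk
      exact absurd hk (hvisit k (by omega))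
    · rw [excise_of_le p ρ hnk] at hk
      exact tsub_le_iff_right.2 (by exact_mod_cast G.cost_le_of_mem_goal hk)

theorem cost_excise_le {i : P} {ρ : ℕ → V} {n p : ℕ}
    (hvisit : (∃ k < n + p, ρ k ∈ G.goal i) → ∃ k < n, ρ k ∈ G.goal i) :
    G.cost i (excise n p ρ) ≤ G.cost i ρ := by
  by_cases h : ∃ k < n + p, ρ k ∈ G.goal i
  · exact (G.cost_excise_of_visit p (hvisit h)).le
  · push Not at h
    exact le_self_add.trans (G.cost_excise_add_of_not_visit h).le

theorem cost_lt_cost_of_cost_excise_lt {i : P} {ρ ρ' : ℕ → V} {n p : ℕ}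
    (heq : ∀ k < n + p, ρ' k = ρ k)
    (hvisit : (∃ k < n + p, ρ k ∈ G.goal i) → ∃ k < n, ρ k ∈ G.goal i)
    (hlt : G.cost i (excise n p ρ') < G.cost i (excise n p ρ)) :
    G.cost i ρ' < G.cost i ρ := by
  by_cases h : ∃ k < n + p, ρ k ∈ G.goal i
  · obtain ⟨k, hkn, hk⟩ := hvisit h
    have hk' : ρ' k ∈ G.goal i := by rwa [heq k (by omega)]
    rwa [G.cost_excise_of_visit p ⟨k, hkn, hk⟩, G.cost_excise_of_visit p ⟨k, hkn, hk'⟩] at hlt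
  · push Not at h
    have h' : ∀ k < n + p, ρ' k ∉ G.goal i := fun k hk => heq k hk ▸ h k hk
    rw [← G.cost_excise_add_of_not_visit h, ← G.cost_excise_add_of_not_visit h']
    exact (ENat.add_lt_add_iff_right (ENat.natCast_ne_top p)).2 hlt

end Excise

section Graft

open Classical in
/-- The strategy that plays after the history `x` as `f` does after the history `y`, and follows
`g` on all histories that do not extend `x`. -/
noncomputable def graft {V : Type*} (x y : List V) (f g : List V → V) (h : List V) : V :=
  if x <+: h then f (y ++ h.drop x.length) else g h

theorem graft_append {V : Type*} (x y : List V) (f g : List V → V) (d : List V) :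
    graft x y f g (x ++ d) = f (y ++ d) := by
  simp [graft]

theorem graft_of_not_isPrefix {V : Type*} {x h : List V} (y : List V) (f g : List V → V)
    (hx : ¬ x <+: h) : graft x y f g h = g h :=
  if_neg hx

theorem graft_of_length_lt {V : Type*} {x h : List V} (y : List V) (f g : List V → V)
    (hx : h.length < x.length) : graft x y f g h = g h :=
  graft_of_not_isPrefix y f g fun hp => hx.not_ge hp.length_le

theorem IsStrategy.graft {P V : Type} {G : ReachGame P V} {i : P} {x y : List V}
    {f g : List V → V} (hf : G.IsStrategy i f) (hg : G.IsStrategy i g) (hx : x ≠ [])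
    (hy : G.IsHistory y) (hlast : G.lastV x = G.lastV y) : G.IsStrategy i (graft x y f g) := by
  intro h hh howner
  by_cases hp : x <+: h
  · obtain ⟨d, rfl⟩ := hp
    rw [G.lastV_append_congr hlast] at howner ⊢
    rw [graft_append]
    exact hf _ (hh.replace_prefix hx hy hlast) howner
  · rw [graft_of_not_isPrefix y f g hp]
    exact hg h hh howner

end Graft

section Shortcut

variable {P V : Type} (G : ReachGame P V) (σ : P → List V → V) {m p : ℕ}

/-- The profile that removes from the outcome of `σ` the cycle between the times `m` and `m + p`:
once the outcome of `σ` has been followed up to time `m`, all players act as if the cycle had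
already been completed. -/
noncomputable def shortcut (m p : ℕ) (i : P) : List V → V :=
  graft (G.outHist σ m) (G.outHist σ (m + p)) (σ i) (σ i)

/-- The strategy `σ'` of player `j` with the cycle of the outcome of `σ` between the times `m` and
`m + p` put back in: follow `σ` up to time `m + p`, then act as `σ'` does when there is no cycle. -/
noncomputable def detour (m p : ℕ) (j : P) (σ' : List V → V) : List V → V :=
  graft (G.outHist σ (m + p)) (G.outHist σ m) σ' (σ j)

variable {σ}

theorem isProfile_shortcut (hσ : G.IsProfile σ) (hcycle : G.outcome σ m = G.outcome σ (m + p)) :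
    G.IsProfile (G.shortcut σ m p) := fun i =>
  (hσ i).graft (hσ i) (G.outHist_ne_nil σ m) (G.isHistory_outHist hσ _) hcycle

theorem isStrategy_detour {j : P} {σ' : List V → V} (hσ : G.IsProfile σ)
    (hσ' : G.IsStrategy j σ') (hcycle : G.outcome σ m = G.outcome σ (m + p)) :
    G.IsStrategy j (G.detour σ m p j σ') :=
  hσ'.graft (hσ j) (G.outHist_ne_nil σ _) (G.isHistory_outHist hσ m) hcycle.symm

theorem outcome_eq_excise {τ : P → List V → V} (hpre : G.outHist τ m = G.outHist σ m)
    (hcycle : G.outcome σ m = G.outcome σ (m + p))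
    (h : ∀ i d, τ i (G.outHist σ m ++ d) = σ i (G.outHist σ (m + p) ++ d)) :
    G.outcome τ = excise (m + 1) p (G.outcome σ) := by
  have hpre_outcome := G.outHist_eq_outHist_iff.1 hpre
  funext k
  rcases lt_or_ge k (m + 1) with hk | hk
  · rw [excise_of_lt p _ hk, hpre_outcome k (Nat.le_of_lt_succ hk)]
  · obtain ⟨c, rfl⟩ := Nat.exists_eq_add_of_le (Nat.le_of_succ_le hk)
    rw [excise_of_le p _ hk, add_right_comm]
    exact G.outcome_add_eq_outcome_add ((hpre_outcome m le_rfl).trans hcycle) (hpre ▸ h) c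

theorem outcome_shortcut (hcycle : G.outcome σ m = G.outcome σ (m + p)) :
    G.outcome (G.shortcut σ m p) = excise (m + 1) p (G.outcome σ) := by
  refine G.outcome_eq_excise ?_ hcycle fun i d => graft_append _ _ _ _ d
  refine (G.outHist_congr fun k hk i _ => ?_).symm
  refine (graft_of_length_lt _ _ _ ?_).symm
  simpa only [length_outHist, add_lt_add_iff_right] using hk

variable [DecidableEq P] (σ)

theorem outHist_update_detour (j : P) (σ' : List V → V) {k : ℕ} (hk : k ≤ m + p) :
    G.outHist (Function.update σ j (G.detour σ m p j σ')) k = G.outHist σ k := by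
  refine (G.outHist_congr fun l hl i _ => ?_).symm
  rcases eq_or_ne i j with rfl | hij
  · have hlen : (G.outHist σ l).length < (G.outHist σ (m + p)).length := by
      simpa only [length_outHist, add_lt_add_iff_right] using hl.trans_le hk
    rw [Function.update_self, detour, graft_of_length_lt _ _ _ hlen]
  · rw [Function.update_of_ne hij]

theorem outcome_update_shortcut_of_follow {j : P} {σ' : List V → V}
    (hcycle : G.outcome σ m = G.outcome σ (m + p))
    (hfollow : G.outHist (Function.update (G.shortcut σ m p) j σ') m = G.outHist σ m) :
    G.outcome (Function.update (G.shortcut σ m p) j σ') =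
      excise (m + 1) p (G.outcome (Function.update σ j (G.detour σ m p j σ'))) := by
  have hbefore := G.outHist_update_detour σ j σ' (Nat.le_add_right m p)
  have hafter := G.outHist_update_detour σ j σ' (le_refl (m + p))
  refine G.outcome_eq_excise (hfollow.trans hbefore.symm) ?_ fun i d => ?_
  · rwa [outcome, outcome, hbefore, hafter]
  · rw [hbefore, hafter]
    rcases eq_or_ne i j with rfl | hij
    · rw [Function.update_self, Function.update_self, detour, graft_append]
    · rw [Function.update_of_ne hij, Function.update_of_ne hij, shortcut, graft_append]

theorem outcome_update_shortcut_of_leave {j : P} {σ' : List V → V}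
    (hleave : G.outHist (Function.update (G.shortcut σ m p) j σ') m ≠ G.outHist σ m) :
    G.outcome (Function.update (G.shortcut σ m p) j σ') = G.outcome (Function.update σ j σ') := by
  have hprefix (k : ℕ) :
      ¬ G.outHist σ m <+: G.outHist (Function.update (G.shortcut σ m p) j σ') k :=
    fun hp => hleave (G.outHist_eq_of_isPrefix _ (G.length_outHist σ m) hp)
  funext k
  refine congrArg G.lastV (G.outHist_congr fun l _ i _ => ?_)
  rcases eq_or_ne i j with rfl | hij
  · rw [Function.update_self, Function.update_self]
  · rw [Function.update_of_ne hij, Function.update_of_ne hij]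
    exact graft_of_not_isPrefix _ _ _ (hprefix l)

/-- Player `j` has a profitable deviation with respect to the profile `σ`: some strategy of `j`
strictly lowers the cost of `j` while all other players keep to `σ`. -/
def HasProfitableDeviation (j : P) : Prop :=
  ∃ σ', G.IsStrategy j σ' ∧ G.cost j (G.outcome (Function.update σ j σ')) < G.cost j (G.outcome σ)

variable {G σ}

theorem HasProfitableDeviation.of_shortcut {j : P} (hσ : G.IsProfile σ)
    (hcycle : G.outcome σ m = G.outcome σ (m + p))
    (hvisit : G.visitL (G.outHist σ (m + p)) ⊆ G.visitL (G.outHist σ m))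
    (h : G.HasProfitableDeviation (G.shortcut σ m p) j) : G.HasProfitableDeviation σ j := by
  have hvisit_j : (∃ k < m + 1 + p, G.outcome σ k ∈ G.goal j) →
      ∃ k < m + 1, G.outcome σ k ∈ G.goal j := by
    rw [add_right_comm, ← mem_visitL_outHist_iff, ← mem_visitL_outHist_iff]
    exact @hvisit j
  obtain ⟨σ', hσ', hlt⟩ := h
  rw [G.outcome_shortcut hcycle] at hlt
  by_cases hfollow : G.outHist (Function.update (G.shortcut σ m p) j σ') m = G.outHist σ m
  · have heq := G.outHist_eq_outHist_iff.1 (G.outHist_update_detour σ j σ' (le_refl (m + p)))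
    rw [G.outcome_update_shortcut_of_follow σ hcycle hfollow] at hlt
    exact ⟨G.detour σ m p j σ', G.isStrategy_detour hσ hσ' hcycle,
      G.cost_lt_cost_of_cost_excise_lt (fun k hk => heq k (by omega)) hvisit_j hlt⟩
  · rw [G.outcome_update_shortcut_of_leave σ hfollow] at hlt
    exact ⟨σ', hσ', hlt.trans_le (G.cost_excise_le hvisit_j)⟩

end Shortcut

end ReachGame

theorem remove_cycle_general {P V : Type} [DecidableEq P] (G : ReachGame P V)
    (prof : P → List V → V) (hprof : G.IsProfile prof)
    (lam lam' : List V) (hlam : lam ≠ [])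
    (hpre : ∀ k : ℕ, k < (lam ++ lam').length →
      G.outcome prof k = (lam ++ lam').getD k G.v0)
    (hvisit : G.visitL lam = G.visitL (lam ++ lam'))
    (hlast : lam.getLastD G.v0 = (lam ++ lam').getLastD G.v0) :
    ∃ τ : P → List V → V, G.IsProfile τ ∧
      G.outcome τ = ReachGame.excise lam.length lam'.length (G.outcome prof) ∧
      ∀ j : P, G.HasProfitableDeviation τ j → G.HasProfitableDeviation prof j := by
  obtain ⟨m, hm⟩ := Nat.exists_eq_succ_of_ne_zero (List.length_pos_iff.2 hlam).ne'
  have hbefore : G.outHist prof m = lam := by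
    refine G.outHist_eq_of_outcome_eq_getD prof hm fun k hk => ?_
    rw [hpre k (by rw [List.length_append]; omega), List.getD_append _ _ _ _ hk]
  have hafter : G.outHist prof (m + lam'.length) = lam ++ lam' :=
    G.outHist_eq_of_outcome_eq_getD prof (by rw [List.length_append]; omega) hpre
  have hcycle : G.outcome prof m = G.outcome prof (m + lam'.length) := by
    rwa [ReachGame.outcome, ReachGame.outcome, hbefore, hafter]
  refine ⟨G.shortcut prof m lam'.length, G.isProfile_shortcut hprof hcycle,
    hm ▸ G.outcome_shortcut hcycle, fun j => .of_shortcut hprof hcycle ?_⟩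
  rw [hbefore, hafter, hvisit]

/-- Let `(σᵢ)` be a strategy profile with outcome `ρ = λλ'ρ̄`, where
`λ'` is nonempty, `Visit(λ) = Visit(λλ')` and `last(λ) = last(λλ')`.  Then there is a
strategy profile `(τᵢ)` with outcome `λρ̄` such that whenever some player `j` has a
profitable deviation w.r.t. `(τᵢ)`, he also has a profitable deviation w.r.t. `(σᵢ)`. -/
theorem remove_cycle {P V : Type} [Fintype P] [DecidableEq P] [Fintype V]
    (G : ReachGame P V)
    (prof : P → List V → V) (hprof : G.IsProfile prof)
    (lam lam' : List V) (hlam : lam ≠ []) (hlam' : lam' ≠ [])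
    (hpre : ∀ k : ℕ, k < (lam ++ lam').length →
      G.outcome prof k = (lam ++ lam').getD k G.v0)
    (hvisit : G.visitL lam = G.visitL (lam ++ lam'))
    (hlast : lam.getLastD G.v0 = (lam ++ lam').getLastD G.v0) :
    ∃ τ : P → List V → V,
      G.IsProfile τ ∧
      (∀ k : ℕ, G.outcome τ k =
        if k < lam.length then G.outcome prof k
        else G.outcome prof (k + lam'.length)) ∧
      (∀ (j : P) (σ' : List V → V), G.IsStrategy j σ' →
        G.cost j (G.outcome (Function.update τ j σ')) < G.cost j (G.outcome τ) →
        ∃ σ'' : List V → V, G.IsStrategy j σ'' ∧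
          G.cost j (G.outcome (Function.update prof j σ'')) <
            G.cost j (G.outcome prof)) := by
  obtain ⟨τ, hτ, hout, hdev⟩ := remove_cycle_general G prof hprof lam lam' hlam hpre hvisit hlast
  exact ⟨τ, hτ, congrFun hout, fun j σ' hσ' hlt => hdev j ⟨σ', hσ', hlt⟩⟩
end

section
/- Let (σ_i)_{i∈Π} be a strategy profile in a quantitative multiplayer reachability game G with outcome ρ = λλ'ρ̄, where λ' contains at least one vertex, Visit(λ) = Visit(ρ) and last(λ) = last(λλ'). Then there exists a strategy profile (τ_i)_{i∈Π} with outcome λ(λ')^ω such that whenever some player j has a profitable deviation with respect to (τ_i)_{i∈Π}, player j also has a profitable deviation with respect to (σ_i)_{i∈Π}. -/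
/-!
Let `ρ` be the outcome of `prof`. The play `λ(λ')^ω` is `ρ ∘ s` for an index map `s` that runs
along `ρ` and jumps back at the end of each copy of `λ'`. Histories of the new profile are
translated: the longest common prefix with `ρ ∘ s`, of length `n` say, is replaced by the first
`s n` vertices of `ρ`. A translated history ends in the same vertex, so playing `prof` on
translated histories is a profile, and its outcome is `ρ ∘ s`. A play that deviates from it after
`n` vertices translates to a play that deviates from `ρ` after `s n ≤ n` vertices, hence reaches
every goal at least as early, whereas no player has a larger cost on `ρ ∘ s` than on `ρ`, since
both plays begin with `λ` and all goals that `ρ` visits are visited by `λ`.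
-/

namespace ReachGame

section InitSeg

variable {V : Type} {ρ π : ℕ → V} {m n k : ℕ} {h : List V}

/-- The list `ρ 0, …, ρ (n - 1)` of the first `n` vertices of a play. -/
def initSeg (ρ : ℕ → V) (n : ℕ) : List V := (List.range n).map ρ

theorem length_initSeg : (initSeg ρ n).length = n := by
  simp [initSeg]

theorem initSeg_succ : initSeg ρ (n + 1) = initSeg ρ n ++ [ρ n] := by
  simp [initSeg, List.range_succ]

theorem initSeg_succ_ne_nil : initSeg ρ (n + 1) ≠ [] := by
  simp [initSeg]

theorem mem_initSeg {v : V} : v ∈ initSeg ρ n ↔ ∃ k < n, ρ k = v := by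
  simp [initSeg]

theorem take_initSeg (hmn : m ≤ n) : (initSeg ρ n).take m = initSeg ρ m := by
  simp [initSeg, ← List.map_take, List.take_range, hmn]

theorem initSeg_prefix_initSeg (hmn : m ≤ n) : initSeg ρ m <+: initSeg ρ n :=
  take_initSeg (ρ := ρ) hmn ▸ List.take_prefix m _

theorem initSeg_congr (hρπ : ∀ k < n, ρ k = π k) : initSeg ρ n = initSeg π n :=
  List.map_congr_left fun k hk => hρπ k (List.mem_range.1 hk)

theorem eq_of_initSeg_eq (hρπ : initSeg ρ n = initSeg π n) (hk : k < n) : ρ k = π k :=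
  List.map_inj_left.1 hρπ k (List.mem_range.2 hk)

theorem initSeg_length_eq {d : V} (hh : ∀ k < h.length, ρ k = h.getD k d) :
    initSeg ρ h.length = h := by
  refine List.ext_getElem length_initSeg fun k _ hk => ?_
  simpa [initSeg, hk] using hh k hk

theorem exists_initSeg_eq_and_ne (hzero : ρ 0 = π 0) {q : ℕ} (hq : ρ q ≠ π q) :
    ∃ t < q, initSeg ρ (t + 1) = initSeg π (t + 1) ∧ ρ (t + 1) ≠ π (t + 1) := by
  induction q using Nat.strong_induction_on with
  | _ q ih =>
    by_cases hagree : ∀ k < q, ρ k = π k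
    · obtain ⟨t, rfl⟩ := Nat.exists_eq_succ_of_ne_zero (n := q) fun hq0 => hq (hq0 ▸ hzero)
      exact ⟨t, t.lt_succ_self, initSeg_congr hagree, hq⟩
    · push Not at hagree
      obtain ⟨k, hkq, hk⟩ := hagree
      obtain ⟨t, htk, ht⟩ := ih k hkq hk
      exact ⟨t, htk.trans hkq, ht⟩

end InitSeg

section CommonPrefix

variable {V : Type} {π : ℕ → V} {n : ℕ} {h : List V}

open Classical in
/-- The length of the longest common prefix of the history `h` and the play `π`. -/
noncomputable def commonLen (π : ℕ → V) (h : List V) : ℕ :=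
  Nat.findGreatest (fun n => initSeg π n <+: h) h.length

theorem initSeg_commonLen_prefix : initSeg π (commonLen π h) <+: h := by
  classical
  exact Nat.findGreatest_spec (P := fun n => initSeg π n <+: h) (Nat.zero_le _) List.nil_prefix

theorem le_commonLen (hn : initSeg π n <+: h) : n ≤ commonLen π h := by
  classical
  exact Nat.le_findGreatest (length_initSeg (ρ := π) (n := n) ▸ hn.length_le) hn

theorem commonLen_eq (hn : initSeg π n <+: h) (hn' : ¬ initSeg π (n + 1) <+: h) :
    commonLen π h = n := by
  refine le_antisymm (not_lt.1 fun hlt => hn' ?_) (le_commonLen hn)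
  exact (initSeg_prefix_initSeg hlt).trans initSeg_commonLen_prefix

theorem commonLen_initSeg : commonLen π (initSeg π n) = n :=
  commonLen_eq List.prefix_rfl fun hn => by simpa [length_initSeg] using hn.length_le

end CommonPrefix

section Splice

variable {V : Type} {ρ β : ℕ → V} {i t k : ℕ}

/-- The sequence `ρ 0, …, ρ (i - 1), β t, β (t + 1), …`, which transplants the continuation of `β`
onto a prefix of `ρ`. -/
def splice (ρ : ℕ → V) (i : ℕ) (β : ℕ → V) (t : ℕ) (k : ℕ) : V :=
  if k < i then ρ k else β (t + (k - i))

theorem splice_add (d : ℕ) : splice ρ i β t (i + d) = β (t + d) := by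
  simp [splice]

theorem splice_of_le (hit : ρ i = β t) (hk : k ≤ i) : splice ρ i β t k = ρ k := by
  rcases hk.lt_or_eq with hlt | rfl
  · exact if_pos hlt
  · rw [hit]; exact splice_add 0

theorem splice_succ_succ (hit : ρ i = β t) : splice ρ (i + 1) β (t + 1) = splice ρ i β t := by
  funext k
  rcases le_or_gt k i with hk | hk
  · rw [splice_of_le hit hk]
    exact if_pos (Nat.lt_succ_of_le hk)
  · obtain ⟨d, rfl⟩ := Nat.exists_eq_add_of_le (Nat.succ_le_of_lt hk)
    rw [splice_add, Nat.succ_eq_add_one, add_assoc i, splice_add, add_assoc]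

theorem initSeg_splice (d : ℕ) :
    initSeg (splice ρ i β t) (i + d) = initSeg ρ i ++ (initSeg β (t + d)).drop t := by
  refine List.ext_getElem (by simp [initSeg]) fun k _ _ => ?_
  simp only [initSeg, splice, List.getElem_map, List.getElem_range, List.getElem_append,
    List.length_map, List.length_range, List.getElem_drop]
  rfl

end Splice

section Histories

variable {P V : Type} (G : ReachGame P V) {ρ β : ℕ → V} {h h' δ : List V}

theorem lastV_append (h δ : List V) : G.lastV (h ++ δ) = δ.getLastD (G.lastV h) := by
  simp [lastV, List.getLastD_eq_getLast?, List.getLast?_append]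

theorem lastV_initSeg_succ (ρ : ℕ → V) (n : ℕ) : G.lastV (initSeg ρ (n + 1)) = ρ n := by
  rw [initSeg_succ, lastV_append]; rfl

theorem lastV_initSeg (ρ : ℕ → V) {n : ℕ} (hn : 0 < n) : G.lastV (initSeg ρ n) = ρ (n - 1) := by
  obtain ⟨k, rfl⟩ := Nat.exists_eq_add_of_le' hn
  exact G.lastV_initSeg_succ ρ k

variable {G}

theorem isHistory_iff : G.IsHistory h ↔ h.head? = some G.v0 ∧ List.IsChain G.E h :=
  ⟨fun hh => hh.2, fun hh => ⟨(by rintro rfl; simp at hh), hh⟩⟩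

theorem isHistory_singleton : G.IsHistory [G.v0] :=
  isHistory_iff.2 ⟨rfl, List.isChain_singleton _⟩

theorem isHistory_append_iff_s7 (hh : h ≠ []) :
    G.IsHistory (h ++ δ) ↔ G.IsHistory h ∧ List.IsChain G.E (G.lastV h :: δ) := by
  obtain ⟨l, v, rfl⟩ := (List.eq_nil_or_concat' h).resolve_left hh
  have hchain : List.IsChain G.E (l ++ v :: δ) ↔
      List.IsChain G.E (l ++ [v]) ∧ List.IsChain G.E (v :: δ) := List.isChain_split
  simp [isHistory_iff, lastV_append, hchain, and_assoc]

theorem IsHistory.concat (hh : G.IsHistory h) {v : V} (hv : G.E (G.lastV h) v) :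
    G.IsHistory (h ++ [v]) :=
  (isHistory_append_iff_s7 hh.1).2 ⟨hh, List.isChain_pair.2 hv⟩

theorem IsHistory.replace_prefix_s7 (hhδ : G.IsHistory (h ++ δ)) (hh : h ≠ [])
    (hh' : G.IsHistory h') (hlast : G.lastV h' = G.lastV h) : G.IsHistory (h' ++ δ) :=
  (isHistory_append_iff_s7 hh'.1).2 ⟨hh', hlast ▸ ((isHistory_append_iff_s7 hh).1 hhδ).2⟩

theorem IsHistory.initSeg_one_prefix (hh : G.IsHistory h) (hρ : ρ 0 = G.v0) :
    initSeg ρ 1 <+: h := by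
  obtain ⟨_, hhead, _⟩ := hh
  obtain ⟨l, rfl⟩ := List.head?_eq_some_iff.1 hhead
  exact ⟨l, by simp [initSeg, hρ]⟩

theorem IsPlay.isHistory_initSeg (hρ : G.IsPlay ρ) (n : ℕ) :
    G.IsHistory (initSeg ρ (n + 1)) := by
  induction n with
  | zero => simpa [initSeg, hρ.1] using isHistory_singleton
  | succ n ih =>
    rw [initSeg_succ]
    exact ih.concat (by simpa only [lastV_initSeg_succ] using hρ.2 n)

theorem IsPlay.splice {i t : ℕ} (hρ : G.IsPlay ρ) (hβ : G.IsPlay β) (hit : ρ i = β t) :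
    G.IsPlay (splice ρ i β t) := by
  refine ⟨by rw [splice_of_le hit (Nat.zero_le i), hρ.1], fun k => ?_⟩
  rcases lt_or_ge k i with hk | hk
  · rw [splice_of_le hit hk.le, splice_of_le hit hk]
    exact hρ.2 k
  · obtain ⟨d, rfl⟩ := Nat.exists_eq_add_of_le hk
    rw [add_assoc, splice_add, splice_add]
    exact hβ.2 (t + d)

end Histories

section Outcomes

variable {P V : Type} {G : ReachGame P V} {prof : P → List V → V} {ρ : ℕ → V} {j : P}

theorem outHist_eq_initSeg (n : ℕ) :
    G.outHist prof n = initSeg (G.outcome prof) (n + 1) := by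
  induction n with
  | zero => rfl
  | succ n ih =>
    rw [initSeg_succ, ← ih, outcome, outHist, lastV_append]
    rfl

theorem outcome_eq_iff :
    G.outcome prof = ρ ↔
      ρ 0 = G.v0 ∧ ∀ k, ρ (k + 1) = prof (G.owner (ρ k)) (initSeg ρ (k + 1)) := by
  constructor
  · rintro rfl
    refine ⟨rfl, fun k => ?_⟩
    rw [← outHist_eq_initSeg, outcome, outHist, lastV_append]
    rfl
  · rintro ⟨hzero, hsucc⟩
    have houtHist (n : ℕ) : G.outHist prof n = initSeg ρ (n + 1) := by
      induction n with
      | zero => simp [outHist, initSeg, hzero]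
      | succ n ih => rw [outHist, ih, lastV_initSeg_succ, ← hsucc, ← initSeg_succ]
    funext n
    rw [outcome, houtHist, lastV_initSeg_succ]

theorem outcome_succ (k : ℕ) :
    G.outcome prof (k + 1) =
      prof (G.owner (G.outcome prof k)) (initSeg (G.outcome prof) (k + 1)) :=
  (outcome_eq_iff.1 rfl).2 k

theorem IsProfile.isPlay_outcome (hprof : G.IsProfile prof) : G.IsPlay (G.outcome prof) := by
  have hstep (k : ℕ) (hk : G.IsHistory (G.outHist prof k)) :
      G.E (G.outcome prof k) (G.outcome prof (k + 1)) := by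
    rw [outcome_succ, ← outHist_eq_initSeg]
    exact hprof _ _ hk rfl
  have hhist (k : ℕ) : G.IsHistory (G.outHist prof k) := by
    induction k with
    | zero => exact isHistory_singleton
    | succ k ih =>
      rw [outHist_eq_initSeg, initSeg_succ, ← outHist_eq_initSeg]
      exact ih.concat (hstep k ih)
  exact ⟨rfl, fun k => hstep k (hhist k)⟩

theorem IsProfile.update [DecidableEq P] (hprof : G.IsProfile prof) {σ : List V → V}
    (hσ : G.IsStrategy j σ) : G.IsProfile (Function.update prof j σ) := by
  intro i
  rcases eq_or_ne i j with rfl | hij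
  · rwa [Function.update_self]
  · rw [Function.update_of_ne hij]
    exact hprof i

open Classical in
/-- The strategy that continues along the play `ρ` on the prefixes of `ρ` and plays `σ` on all
other histories. -/
noncomputable def follow (ρ : ℕ → V) (σ : List V → V) (h : List V) : V :=
  if h = initSeg ρ h.length then ρ h.length else σ h

theorem follow_initSeg (σ : List V → V) (n : ℕ) : follow ρ σ (initSeg ρ n) = ρ n := by
  simp [follow, length_initSeg]

theorem IsStrategy.follow {σ : List V → V} (hσ : G.IsStrategy j σ) (hρ : G.IsPlay ρ) :
    G.IsStrategy j (follow ρ σ) := by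
  intro h hh howner
  by_cases hprefix : h = initSeg ρ h.length
  · obtain ⟨n, hn⟩ := Nat.exists_eq_succ_of_ne_zero (List.length_pos_iff.2 hh.1).ne'
    rw [hprefix, hn, follow_initSeg, lastV_initSeg_succ]
    exact hρ.2 n
  · rw [ReachGame.follow, if_neg hprefix]
    exact hσ h hh howner

end Outcomes

section Deviations

variable {P V : Type} {G : ReachGame P V} {prof : P → List V → V} {ρ : ℕ → V} {j : P}

/-- A play in which all players other than `j` follow `prof`: these are the outcomes of the
unilateral deviations of player `j`. -/
structure IsDeviationPlay (G : ReachGame P V) (prof : P → List V → V) (j : P)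
    (ρ : ℕ → V) : Prop where
  isPlay : G.IsPlay ρ
  apply_succ : ∀ k, G.owner (ρ k) ≠ j → ρ (k + 1) = prof (G.owner (ρ k)) (initSeg ρ (k + 1))

theorem exists_outcome_update_eq_iff [DecidableEq P] (hprof : G.IsProfile prof) :
    (∃ σ, G.IsStrategy j σ ∧ G.outcome (Function.update prof j σ) = ρ) ↔
      G.IsDeviationPlay prof j ρ := by
  constructor
  · rintro ⟨σ, hσ, rfl⟩
    refine ⟨(hprof.update hσ).isPlay_outcome, fun k hk => ?_⟩
    rw [outcome_succ, Function.update_of_ne hk]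
  · intro hρ
    refine ⟨follow ρ (prof j), (hprof j).follow hρ.isPlay,
      outcome_eq_iff.2 ⟨hρ.isPlay.1, fun k => ?_⟩⟩
    by_cases hk : G.owner (ρ k) = j
    · rw [hk, Function.update_self, follow_initSeg]
    · rw [Function.update_of_ne hk, hρ.apply_succ k hk]

end Deviations

section Cost

variable {P V : Type} {G : ReachGame P V} {ρ π : ℕ → V} {j : P}

theorem cost_le_of_mem_goal_s7 {l : ℕ} (hl : ρ l ∈ G.goal j) : G.cost j ρ ≤ l :=
  sInf_le ⟨l, rfl, hl⟩

theorem exists_mem_goal_of_cost_lt {c : ℕ∞} (hc : G.cost j ρ < c) :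
    ∃ l : ℕ, (l : ℕ∞) < c ∧ ρ l ∈ G.goal j := by
  obtain ⟨_, ⟨l, rfl, hl⟩, hlc⟩ := sInf_lt_iff.1 hc
  exact ⟨l, hlc, hl⟩

theorem cost_le_cost_of_initSeg_eq {m : ℕ} (hρπ : initSeg ρ m = initSeg π m)
    (hvisit : ∀ l, π l ∈ G.goal j → j ∈ G.visitL (initSeg π m)) :
    G.cost j ρ ≤ G.cost j π := by
  refine le_sInf ?_
  rintro _ ⟨l, rfl, hl⟩
  obtain ⟨k, hkl, hkm, hk⟩ : ∃ k ≤ l, k < m ∧ π k ∈ G.goal j := by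
    obtain ⟨_, hmem, hgoal⟩ := hvisit l hl
    obtain ⟨k, hkm, rfl⟩ := mem_initSeg.1 hmem
    rcases le_total k l with hkl | hlk
    · exact ⟨k, hkl, hkm, hgoal⟩
    · exact ⟨l, le_rfl, hlk.trans_lt hkm, hl⟩
  rw [← eq_of_initSeg_eq hρπ hkm] at hk
  exact (cost_le_of_mem_goal_s7 hk).trans (mod_cast hkl)

end Cost

section Retiming

variable {P V : Type} {G : ReachGame P V} {prof : P → List V → V} {ρ : ℕ → V} {s : ℕ → ℕ}

/-- `s` runs along the play `ρ`, except that at a repeated vertex it may jump between the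
occurrences; the sequence `ρ ∘ s` is then again a play. The value `s n` is the number of vertices
of `ρ` that stand for the first `n` vertices of `ρ ∘ s`, whence the predecessor `i` of `s (k + 1)`
is an index at which `ρ` visits the vertex number `k` of `ρ ∘ s`. -/
structure IsRetiming (ρ : ℕ → V) (s : ℕ → ℕ) : Prop where
  map_zero : s 0 = 0
  map_le : ∀ k, s k ≤ k
  exists_pred : ∀ k, ∃ i, s (k + 1) = i + 1 ∧ ρ i = ρ (s k)

/-- The history `h` with its longest common prefix with `ρ ∘ s` replaced by the corresponding
prefix of `ρ`. -/
noncomputable def translate (ρ : ℕ → V) (s : ℕ → ℕ) (h : List V) : List V :=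
  initSeg ρ (s (commonLen (ρ ∘ s) h)) ++ h.drop (commonLen (ρ ∘ s) h)

theorem translate_initSeg (n : ℕ) : translate ρ s (initSeg (ρ ∘ s) n) = initSeg ρ (s n) := by
  rw [translate, commonLen_initSeg, List.drop_eq_nil_of_le length_initSeg.le, List.append_nil]

theorem translate_initSeg_of_ne {β : ℕ → V} {n : ℕ} (hagree : initSeg β n = initSeg (ρ ∘ s) n)
    (hne : β n ≠ ρ (s n)) (d : ℕ) :
    translate ρ s (initSeg β (n + d)) = initSeg (splice ρ (s n) β n) (s n + d) := by
  have hprefix : initSeg (ρ ∘ s) n <+: initSeg β (n + d) :=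
    hagree ▸ initSeg_prefix_initSeg (Nat.le_add_right n d)
  have hmaximal : ¬ initSeg (ρ ∘ s) (n + 1) <+: initSeg β (n + d) := by
    intro hlonger
    have hle : n + 1 ≤ n + d := by simpa only [length_initSeg] using hlonger.length_le
    have heq := List.prefix_iff_eq_take.1 hlonger
    rw [length_initSeg, take_initSeg hle] at heq
    exact hne (eq_of_initSeg_eq heq n.lt_succ_self).symm
  rw [translate, commonLen_eq hprefix hmaximal, initSeg_splice]

theorem IsRetiming.isHistory_translate (hs : IsRetiming ρ s) (hρ : G.IsPlay ρ) {h : List V}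
    (hh : G.IsHistory h) :
    G.IsHistory (translate ρ s h) ∧ G.lastV (translate ρ s h) = G.lastV h := by
  have hpos : 1 ≤ commonLen (ρ ∘ s) h :=
    le_commonLen (hh.initSeg_one_prefix (by rw [Function.comp_apply, hs.map_zero, hρ.1]))
  obtain ⟨t, ht⟩ := Nat.exists_eq_add_of_le' hpos
  obtain ⟨i, hi, hit⟩ := hs.exists_pred t
  obtain ⟨δ, hδ⟩ : initSeg (ρ ∘ s) (t + 1) <+: h := ht ▸ initSeg_commonLen_prefix
  have htranslate : translate ρ s h = initSeg ρ (i + 1) ++ δ := by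
    rw [translate, ht, hi, ← hδ, List.drop_left' length_initSeg]
  have hlast : G.lastV (initSeg ρ (i + 1)) = G.lastV (initSeg (ρ ∘ s) (t + 1)) := by
    rw [lastV_initSeg_succ, lastV_initSeg_succ, hit, Function.comp_apply]
  rw [htranslate, ← hδ, lastV_append, lastV_append, hlast]
  exact ⟨(hδ ▸ hh).replace_prefix_s7 initSeg_succ_ne_nil (hρ.isHistory_initSeg i) hlast, rfl⟩

/-- The profile that plays `prof` on translated histories. -/
noncomputable def retime (G : ReachGame P V) (prof : P → List V → V) (s : ℕ → ℕ) :
    P → List V → V :=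
  fun i h => prof i (translate (G.outcome prof) s h)

theorem IsRetiming.isProfile_retime (hs : IsRetiming (G.outcome prof) s)
    (hprof : G.IsProfile prof) : G.IsProfile (G.retime prof s) := by
  intro i h hh howner
  obtain ⟨hhist, hlast⟩ := hs.isHistory_translate hprof.isPlay_outcome hh
  exact hlast ▸ hprof i _ hhist (hlast ▸ howner)

theorem IsRetiming.outcome_retime (hs : IsRetiming (G.outcome prof) s) :
    G.outcome (G.retime prof s) = G.outcome prof ∘ s := by
  refine outcome_eq_iff.2 ⟨by rw [Function.comp_apply, hs.map_zero]; rfl, fun k => ?_⟩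
  obtain ⟨i, hi, hik⟩ := hs.exists_pred k
  rw [retime, translate_initSeg, Function.comp_apply, Function.comp_apply, hi, outcome_succ, hik]

theorem IsRetiming.exists_isDeviationPlay (hs : IsRetiming (G.outcome prof) s)
    (hprof : G.IsProfile prof) {j : P} {β : ℕ → V}
    (hβ : G.IsDeviationPlay (G.retime prof s) j β) {q : ℕ} (hq : β q ≠ G.outcome prof (s q)) :
    ∃ γ, G.IsDeviationPlay prof j γ ∧ ∃ l ≤ q, γ l = β q := by
  have hzero : β 0 = (G.outcome prof ∘ s) 0 := by
    rw [Function.comp_apply, hs.map_zero, hβ.isPlay.1, hprof.isPlay_outcome.1]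
  obtain ⟨t, htq, hagree, hne⟩ := exists_initSeg_eq_and_ne hzero hq
  obtain ⟨i, hi, hik⟩ := hs.exists_pred t
  have hit : G.outcome prof i = β t := hik.trans (eq_of_initSeg_eq hagree t.lt_succ_self).symm
  have htranslate (d : ℕ) : translate (G.outcome prof) s (initSeg β (t + d + 1)) =
      initSeg (splice (G.outcome prof) i β t) (i + d + 1) := by
    rw [add_right_comm, translate_initSeg_of_ne hagree hne, hi, splice_succ_succ hit,
      add_right_comm]
  refine ⟨splice (G.outcome prof) i β t, ⟨hprof.isPlay_outcome.splice hβ.isPlay hit, ?_⟩, ?_⟩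
  · intro k hk
    rcases lt_or_ge k i with hki | hik
    · rw [splice_of_le hit hki.le, splice_of_le hit hki, outcome_succ,
        initSeg_congr fun l hl => splice_of_le hit (Nat.lt_succ_iff.1 hl |>.trans hki.le)]
    · obtain ⟨d, rfl⟩ := Nat.exists_eq_add_of_le hik
      rw [splice_add] at hk
      rw [add_assoc, splice_add, splice_add, ← add_assoc, ← add_assoc, hβ.apply_succ _ hk, retime,
        htranslate]
  · obtain ⟨d, rfl⟩ := Nat.exists_eq_add_of_le htq.le
    have hle : i + 1 ≤ t + 1 := hi ▸ hs.map_le (t + 1)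
    exact ⟨i + d, by lia, splice_add d⟩

theorem IsRetiming.exists_profitable_deviation [DecidableEq P]
    (hs : IsRetiming (G.outcome prof) s) (hprof : G.IsProfile prof) {j : P}
    (hcost : G.cost j (G.outcome prof ∘ s) ≤ G.cost j (G.outcome prof)) {σ : List V → V}
    (hσ : G.IsStrategy j σ)
    (hlt : G.cost j (G.outcome (Function.update (G.retime prof s) j σ)) <
      G.cost j (G.outcome (G.retime prof s))) :
    ∃ σ', G.IsStrategy j σ' ∧
      G.cost j (G.outcome (Function.update prof j σ')) < G.cost j (G.outcome prof) := by
  rw [hs.outcome_retime] at hlt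
  obtain ⟨q, hq, hgoal⟩ := exists_mem_goal_of_cost_lt hlt
  have hβ := (exists_outcome_update_eq_iff (hs.isProfile_retime hprof)).1 ⟨σ, hσ, rfl⟩
  have hne : G.outcome (Function.update (G.retime prof s) j σ) q ≠ G.outcome prof (s q) :=
    fun heq => hq.not_ge (cost_le_of_mem_goal_s7 (by rwa [heq] at hgoal))
  obtain ⟨γ, hγ, l, hlq, hl⟩ := hs.exists_isDeviationPlay hprof hβ hne
  obtain ⟨σ', hσ', rfl⟩ := (exists_outcome_update_eq_iff hprof).2 hγ
  refine ⟨σ', hσ', ?_⟩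
  calc G.cost j (G.outcome (Function.update prof j σ'))
      ≤ l := cost_le_of_mem_goal_s7 (hl ▸ hgoal)
    _ ≤ q := mod_cast hlq
    _ < G.cost j (G.outcome prof ∘ s) := hq
    _ ≤ G.cost j (G.outcome prof) := hcost

end Retiming

section LoopIndex

variable {V : Type} {ρ : ℕ → V} {m n k : ℕ}

/-- The index map of the sequence that runs through `0, …, m + n - 1` and then repeats the last
`n` of these indices forever. -/
def loopIndex (m n k : ℕ) : ℕ := if k < m then k else m + (k - m) % n

theorem loopIndex_of_lt (hk : k < m) : loopIndex m n k = k := if_pos hk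

theorem loopIndex_add (d : ℕ) : loopIndex m n (m + d) = m + d % n := by
  simp [loopIndex]

theorem isRetiming_loopIndex (hm : 0 < m) (hn : 0 < n) (hρ : ρ (m - 1) = ρ (m + n - 1)) :
    IsRetiming ρ (loopIndex m n) where
  map_zero := loopIndex_of_lt hm
  map_le k := by
    rcases lt_or_ge k m with hk | hk
    · exact (loopIndex_of_lt hk).le
    · have := Nat.mod_le (k - m) n
      rw [loopIndex, if_neg hk.not_gt]
      lia
  exists_pred k := by
    rcases lt_or_ge k m with hkm | hmk
    · refine ⟨k, ?_, by rw [loopIndex_of_lt hkm]⟩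
      rcases (Nat.succ_le_of_lt hkm).lt_or_eq with hlt | heq
      · exact loopIndex_of_lt hlt
      · simp [loopIndex, ← heq]
    · obtain ⟨d, rfl⟩ := Nat.exists_eq_add_of_le hmk
      rw [add_assoc, loopIndex_add, loopIndex_add]
      rcases (Nat.succ_le_of_lt (Nat.mod_lt d hn)).lt_or_eq with hlt | heq
      · exact ⟨m + d % n, by rw [← Nat.mod_add_mod, Nat.mod_eq_of_lt hlt]; rfl, rfl⟩
      · have hmod : (d + 1) % n = 0 := by
          rw [← Nat.mod_add_mod, ← Nat.succ_eq_add_one, heq, Nat.mod_self]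
        refine ⟨m - 1, by lia, ?_⟩
        rw [hρ, show m + n - 1 = m + d % n by lia]

theorem apply_loopIndex {l l' : List V} {d : V} (hl' : l' ≠ [])
    (hρ : ∀ k < (l ++ l').length, ρ k = (l ++ l').getD k d) (k : ℕ) :
    ρ (loopIndex l.length l'.length k) =
      if k < l.length then ρ k else l'.getD ((k - l.length) % l'.length) d := by
  split_ifs with hk
  · rw [loopIndex_of_lt hk]
  · have hmod := Nat.mod_lt (k - l.length) (List.length_pos_iff.2 hl')
    rw [loopIndex, if_neg hk, hρ _ (by rw [List.length_append]; lia),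
      List.getD_append_right _ _ _ _ (Nat.le_add_right _ _), Nat.add_sub_cancel_left]

end LoopIndex

end ReachGame

open ReachGame in
theorem repeat_cycle_general {P V : Type} [DecidableEq P] (G : ReachGame P V)
    (prof : P → List V → V) (hprof : G.IsProfile prof)
    (lam lam' : List V) (hlam : lam ≠ []) (hlam' : lam' ≠ [])
    (hpre : ∀ k : ℕ, k < (lam ++ lam').length →
      G.outcome prof k = (lam ++ lam').getD k G.v0)
    (hvisit : G.visitL lam = G.typeOf prof)
    (hlast : lam.getLastD G.v0 = (lam ++ lam').getLastD G.v0) :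
    ∃ τ : P → List V → V,
      G.IsProfile τ ∧
      (∀ k : ℕ, G.outcome τ k =
        if k < lam.length then G.outcome prof k
        else lam'.getD ((k - lam.length) % lam'.length) G.v0) ∧
      (∀ (j : P) (σ' : List V → V), G.IsStrategy j σ' →
        G.cost j (G.outcome (Function.update τ j σ')) < G.cost j (G.outcome τ) →
        ∃ σ'' : List V → V, G.IsStrategy j σ'' ∧
          G.cost j (G.outcome (Function.update prof j σ'')) <
            G.cost j (G.outcome prof)) := by
  set m := lam.length
  set n := lam'.length
  have hm : 0 < m := List.length_pos_iff.2 hlam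
  have hn : 0 < n := List.length_pos_iff.2 hlam'
  have hseg' : initSeg (G.outcome prof) (m + n) = lam ++ lam' := by
    simpa only [List.length_append] using initSeg_length_eq hpre
  have hseg : initSeg (G.outcome prof) m = lam := by
    rw [← take_initSeg (Nat.le_add_right m n), hseg', List.take_left' rfl]
  have hcycle : G.outcome prof (m - 1) = G.outcome prof (m + n - 1) := by
    rwa [← G.lastV_initSeg (G.outcome prof) hm,
      ← G.lastV_initSeg (G.outcome prof) (Nat.add_pos_left hm n), hseg, hseg']
  have hs : IsRetiming (G.outcome prof) (loopIndex m n) := isRetiming_loopIndex hm hn hcycle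
  have hcost (j : P) : G.cost j (G.outcome prof ∘ loopIndex m n) ≤ G.cost j (G.outcome prof) :=
    cost_le_cost_of_initSeg_eq
      (initSeg_congr fun k hk => by rw [Function.comp_apply, loopIndex_of_lt hk])
      fun l hl => by rw [hseg, hvisit]; exact ⟨l, hl⟩
  refine ⟨G.retime prof (loopIndex m n), hs.isProfile_retime hprof, fun k => ?_,
    fun j _ hσ => hs.exists_profitable_deviation hprof (hcost j) hσ⟩
  rw [hs.outcome_retime, Function.comp_apply, apply_loopIndex hlam' hpre]

/-- Let `(σᵢ)` be a strategy profile with outcome `ρ = λλ'ρ̄`, where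
`λ'` is nonempty, `Visit(λ) = Visit(ρ)` and `last(λ) = last(λλ')`.  Then there is a
strategy profile `(τᵢ)` with outcome `λ(λ')^ω` such that whenever some player `j` has
a profitable deviation w.r.t. `(τᵢ)`, he also has a profitable deviation w.r.t.
`(σᵢ)`. -/
theorem repeat_cycle {P V : Type} [Fintype P] [DecidableEq P] [Fintype V]
    (G : ReachGame P V)
    (prof : P → List V → V) (hprof : G.IsProfile prof)
    (lam lam' : List V) (hlam : lam ≠ []) (hlam' : lam' ≠ [])
    (hpre : ∀ k : ℕ, k < (lam ++ lam').length →
      G.outcome prof k = (lam ++ lam').getD k G.v0)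
    (hvisit : G.visitL lam = G.typeOf prof)
    (hlast : lam.getLastD G.v0 = (lam ++ lam').getLastD G.v0) :
    ∃ τ : P → List V → V,
      G.IsProfile τ ∧
      (∀ k : ℕ, G.outcome τ k =
        if k < lam.length then G.outcome prof k
        else lam'.getD ((k - lam.length) % lam'.length) G.v0) ∧
      (∀ (j : P) (σ' : List V → V), G.IsStrategy j σ' →
        G.cost j (G.outcome (Function.update τ j σ')) < G.cost j (G.outcome τ) →
        ∃ σ'' : List V → V, G.IsStrategy j σ'' ∧
          G.cost j (G.outcome (Function.update prof j σ'')) <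
            G.cost j (G.outcome prof)) := by
  exact repeat_cycle_general G prof hprof lam lam' hlam hlam' hpre hvisit hlast
end
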